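/- Fix 0 < α < 2 and δ₁, δ₂ > 0, and let g = g_{α,δ₁,δ₂}: ℝ → ℝ be the piecewise map defined below. Let μ be the probability measure on ℝ with density ρ_{α,δ₁,δ₂} with respect to Lebesgue measure. Then g is ergodic with respect to μ: g is measure-preserving for μ, and every measurable set A with g⁻¹(A) = A (up to μ-null sets) satisfies μ(A) = 0 or μ(A) = 1. -/

import Mathlib

open MeasureTheory Filter

/-- The asymmetric power-law invariant density `ρ_{α,δ₁,δ₂}`. -/
noncomputable def rhoDensity (α δ₁ δ₂ : ℝ) (x : ℝ) : ℝ :=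
  if 0 < x then α * δ₁ ^ α * x ^ (α - 1) / (Real.pi * (1 + δ₁ ^ (2 * α) * x ^ (2 * α)))
  else if x < 0 then α * δ₂ ^ α * |x| ^ (α - 1) / (Real.pi * (1 + δ₂ ^ (2 * α) * |x| ^ (2 * α)))
  else 0

/-- The piecewise chaotic map `g_{α,δ₁,δ₂}` of Umeno. -/
noncomputable def gMap (α δ₁ δ₂ : ℝ) (x : ℝ) : ℝ :=
  if 1 / δ₁ < x then
    1 / (δ₁ ^ 2 * |x|) * ((|δ₁ * x| ^ (2 * α) - 1) / 2) ^ (1 / α)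
  else if 0 < x ∧ x < 1 / δ₁ then
    -(1 / (δ₁ * δ₂ * |x|)) * ((1 - |δ₁ * x| ^ (2 * α)) / 2) ^ (1 / α)
  else if -(1 / δ₂) < x ∧ x < 0 then
    1 / (δ₁ * δ₂ * |x|) * ((1 - |δ₂ * x| ^ (2 * α)) / 2) ^ (1 / α)
  else if x < -(1 / δ₂) then
    -(1 / (δ₂ ^ 2 * |x|)) * ((|δ₂ * x| ^ (2 * α) - 1) / 2) ^ (1 / α)
  else 0

/-!
The cotangent doubling formula `cot 2θ = (cot θ - 1 / cot θ) / 2` makes `y ↦ (y - 1 / y) / 2` a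
factor, through `t ↦ cot (π t)`, of the doubling map of the circle. As `cot (π t)` carries Lebesgue
measure on `(0, 1)` to the Cauchy law, this map is ergodic for the Cauchy law. The signed power
`x ↦ (δ₁ x) ^ α` for `x > 0`, `x ↦ -(δ₂ |x|) ^ α` for `x < 0`, carries `ρ_{α,δ₁,δ₂}` to the
Cauchy density and conjugates `g_{α,δ₁,δ₂}` to the same map.
-/

section

open Set Function ProbabilityTheory

theorem measurePreserving_withDensity_of_bijOn_of_hasDerivWithinAt {f f' : ℝ → ℝ} {s t : Set ℝ}
    {p q : ℝ → ENNReal} (hfm : Measurable f) (hs : MeasurableSet s) (hbij : BijOn f s t)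
    (hf' : ∀ x ∈ s, HasDerivWithinAt f (f' x) s x)
    (hq : ∀ x ∈ s, q x = ENNReal.ofReal |f' x| * p (f x)) :
    MeasurePreserving f ((volume.restrict s).withDensity q)
      ((volume.restrict t).withDensity p) := by
  refine ⟨hfm, Measure.ext fun A hA ↦ ?_⟩
  have hAs : MeasurableSet (s ∩ f ⁻¹' A) := hs.inter (hfm hA)
  rw [Measure.map_apply hfm hA, withDensity_apply _ (hfm hA), withDensity_apply _ hA,
    Measure.restrict_restrict (hfm hA), Measure.restrict_restrict hA, inter_comm (f ⁻¹' A),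
    inter_comm A]
  calc ∫⁻ x in s ∩ f ⁻¹' A, q x
      = ∫⁻ x in s ∩ f ⁻¹' A, ENNReal.ofReal |f' x| * p (f x) :=
        setLIntegral_congr_fun hAs fun x hx ↦ hq x hx.1
    _ = ∫⁻ y in f '' (s ∩ f ⁻¹' A), p y :=
        (lintegral_image_eq_lintegral_abs_deriv_mul hAs
          (fun x hx ↦ (hf' x hx.1).mono inter_subset_left) (hbij.injOn.mono inter_subset_left)
          p).symm
    _ = ∫⁻ y in t ∩ A, p y := by rw [image_inter_preimage, hbij.image_eq]

theorem ergodic_of_periodic_of_semiconj_nsmul {β : Type*} [MeasurableSpace β] {ν : Measure β}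
    {T a : ℝ} [Fact (0 < T)] {n : ℕ} (hn : 1 < n) {φ : ℝ → β} {B : β → β}
    (hper : Periodic φ T)
    (hφ : MeasurePreserving φ (volume.restrict (Ioc a (a + T))) ν) (hB : Measurable B)
    (hsemi : Semiconj φ (n • ·) B) : Ergodic B ν := by
  have hmk := AddCircle.measurePreserving_mk T a
  have hlift : MeasurePreserving (hper.lift : AddCircle T → β) volume ν := by
    rw [← hmk.map_eq]
    exact MeasurePreserving.map_of_comp hφ (measurable_from_quotient.2 hφ.measurable) hmk.measurable
  refine hlift.ergodic_of_ergodic_semiconj (AddCircle.ergodic_nsmul hn) hB fun z ↦ ?_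
  induction z using QuotientAddGroup.induction_on with
  | H t => exact hsemi t

theorem rpow_two_mul_of_nonneg {x : ℝ} (hx : 0 ≤ x) (p : ℝ) : x ^ (2 * p) = (x ^ p) ^ 2 := by
  rw [mul_comm]
  exact Real.rpow_mul_natCast hx p 2

section Cauchy

/-- The rescaled Boole transformation, which is the duplication map of the cotangent. The junk value
`0⁻¹ = 0` makes it fix the pole `0`. -/
noncomputable def halfBoole (y : ℝ) : ℝ := (y - y⁻¹) / 2

theorem measurable_halfBoole : Measurable halfBoole := by
  unfold halfBoole
  fun_prop

theorem halfBoole_neg (y : ℝ) : halfBoole (-y) = -halfBoole y := by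
  rw [halfBoole, halfBoole, inv_neg]
  ring

theorem halfBoole_rpow {x : ℝ} (hx : 0 < x) (p : ℝ) :
    halfBoole (x ^ p) = (x ^ (2 * p) - 1) / 2 / x ^ p := by
  rw [halfBoole, rpow_two_mul_of_nonneg hx.le]
  field_simp

theorem cot_two_mul_eq_halfBoole (θ : ℝ) : Real.cot (2 * θ) = halfBoole (Real.cot θ) := by
  rw [halfBoole, Real.cot_eq_cos_div_sin, Real.cot_eq_cos_div_sin, Real.cos_two_mul',
    Real.sin_two_mul]
  by_cases hs : Real.sin θ = 0
  · simp [hs]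
  by_cases hc : Real.cos θ = 0
  · simp [hc]
  field_simp

theorem semiconj_cot_pi_mul_halfBoole :
    Semiconj (fun t ↦ Real.cot (Real.pi * t)) ((2 : ℕ) • ·) halfBoole := fun t ↦ by
  simp only [nsmul_eq_mul, Nat.cast_ofNat, mul_left_comm Real.pi, cot_two_mul_eq_halfBoole]

theorem periodic_cot_pi_mul : Periodic (fun t ↦ Real.cot (Real.pi * t)) 1 := fun t ↦ by
  simp only [Real.cot_eq_cos_div_sin, mul_add, mul_one, Real.cos_add_pi, Real.sin_add_pi,
    neg_div_neg_eq]

theorem measurable_cot_pi_mul : Measurable fun t ↦ Real.cot (Real.pi * t) := by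
  simp only [Real.cot_eq_cos_div_sin]
  fun_prop

theorem hasDerivAt_cot {θ : ℝ} (hθ : Real.sin θ ≠ 0) :
    HasDerivAt Real.cot (-(1 + Real.cot θ ^ 2)) θ := by
  have hquot := (Real.hasDerivAt_cos θ).div (Real.hasDerivAt_sin θ) hθ
  refine (hquot.congr_of_eventuallyEq (.of_forall Real.cot_eq_cos_div_sin)).congr_deriv ?_
  rw [Real.cot_eq_cos_div_sin]
  field_simp
  ring

theorem hasDerivAt_cot_pi_mul {t : ℝ} (ht : Real.sin (Real.pi * t) ≠ 0) :
    HasDerivAt (fun t ↦ Real.cot (Real.pi * t))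
      (-(1 + Real.cot (Real.pi * t) ^ 2) * Real.pi) t := by
  exact (hasDerivAt_cot ht).comp t (hasDerivAt_const_mul Real.pi)

theorem bijOn_cot_pi_mul : BijOn (fun t ↦ Real.cot (Real.pi * t)) (Ioo 0 1) univ := by
  have hpi := Real.pi_pos
  have hcot (t : ℝ) : Real.cot (Real.pi * t) = Real.tan (Real.pi / 2 - Real.pi * t) := by
    rw [Real.tan_pi_div_two_sub, Real.tan_inv_eq_cot]
  have hinv : InvOn (fun y ↦ 1 / 2 - Real.arctan y / Real.pi)
      (fun t ↦ Real.cot (Real.pi * t)) (Ioo 0 1) univ := by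
    refine ⟨fun t ht ↦ ?_, fun y _ ↦ ?_⟩
    · simp only [hcot]
      rw [Real.arctan_tan (by nlinarith [ht.2]) (by nlinarith [ht.1])]
      field_simp
      ring
    · simp only [hcot]
      rw [show Real.pi / 2 - Real.pi * (1 / 2 - Real.arctan y / Real.pi) = Real.arctan y by
        field_simp; ring, Real.tan_arctan]
  refine hinv.bijOn (mapsTo_univ _ _) fun y _ ↦ ⟨?_, ?_⟩
  · have : Real.arctan y / Real.pi < 1 / 2 := by
      rw [div_lt_iff₀ hpi]; linarith [Real.arctan_lt_pi_div_two y]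
    linarith
  · have : -(1 / 2) < Real.arctan y / Real.pi := by
      rw [lt_div_iff₀ hpi]; linarith [Real.neg_pi_div_two_lt_arctan y]
    linarith

theorem measurePreserving_cot_pi_mul :
    MeasurePreserving (fun t ↦ Real.cot (Real.pi * t)) (volume.restrict (Ioo 0 1))
      (cauchyMeasure 0 1) := by
  have hsin (t : ℝ) (ht : t ∈ Ioo (0 : ℝ) 1) : Real.sin (Real.pi * t) ≠ 0 :=
    (Real.sin_pos_of_pos_of_lt_pi (mul_pos Real.pi_pos ht.1)
      (mul_lt_of_lt_one_right Real.pi_pos ht.2)).ne'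
  have hdensity (y : ℝ) :
      1 = ENNReal.ofReal |-(1 + y ^ 2) * Real.pi| * cauchyPDF 0 1 y := by
    have hpos : 0 < 1 + y ^ 2 := by positivity
    rw [cauchyPDF_def, cauchyPDFReal_def, ← ENNReal.ofReal_mul (abs_nonneg _), neg_mul, abs_neg,
      abs_of_pos (mul_pos hpos Real.pi_pos), ← ENNReal.ofReal_one, NNReal.coe_one]
    congr 1
    rw [sub_zero, one_pow, add_comm (y ^ 2)]
    field_simp
  simpa only [Measure.restrict_univ, ← cauchyMeasure_of_scale_ne_zero 0 one_ne_zero,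
    ← Pi.one_def, withDensity_one] using
    measurePreserving_withDensity_of_bijOn_of_hasDerivWithinAt measurable_cot_pi_mul
      measurableSet_Ioo bijOn_cot_pi_mul
      (fun t ht ↦ (hasDerivAt_cot_pi_mul (hsin t ht)).hasDerivWithinAt)
      (fun t _ ↦ hdensity (Real.cot (Real.pi * t)))

theorem ergodic_halfBoole_cauchyMeasure : Ergodic halfBoole (cauchyMeasure 0 1) := by
  refine ergodic_of_periodic_of_semiconj_nsmul (a := 0) one_lt_two periodic_cot_pi_mul ?_
    measurable_halfBoole semiconj_cot_pi_mul_halfBoole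
  rw [zero_add, ← restrict_Ioo_eq_restrict_Ioc]
  exact measurePreserving_cot_pi_mul

end Cauchy

section SignedRpow

variable {p a b : ℝ}

/-- The signed `p`-th power with weight `a` on the positive and `b` on the negative half-line. For
`p = α`, `a = δ₁ ^ α`, `b = δ₂ ^ α` it carries the density `ρ_{α,δ₁,δ₂}` to the Cauchy density. -/
noncomputable def signedRpow (p a b x : ℝ) : ℝ :=
  if 0 ≤ x then a * x ^ p else -(b * (-x) ^ p)

theorem signedRpow_of_nonneg (p a b : ℝ) {x : ℝ} (hx : 0 ≤ x) :
    signedRpow p a b x = a * x ^ p :=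
  if_pos hx

theorem signedRpow_of_neg (p a b : ℝ) {x : ℝ} (hx : x < 0) :
    signedRpow p a b x = -(b * (-x) ^ p) :=
  if_neg hx.not_ge

theorem signedRpow_zero (hp : p ≠ 0) (a b : ℝ) : signedRpow p a b 0 = 0 := by
  rw [signedRpow_of_nonneg p a b le_rfl, Real.zero_rpow hp, mul_zero]

theorem signedRpow_neg (hp : p ≠ 0) (a b x : ℝ) :
    signedRpow p a b (-x) = -signedRpow p b a x := by
  rcases lt_trichotomy x 0 with hx | rfl | hx
  · rw [signedRpow_of_nonneg p a b (neg_nonneg.2 hx.le), signedRpow_of_neg p b a hx, neg_neg]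
  · rw [neg_zero, signedRpow_zero hp, signedRpow_zero hp, neg_zero]
  · rw [signedRpow_of_neg p a b (neg_neg_of_pos hx), signedRpow_of_nonneg p b a hx.le, neg_neg]

theorem signedRpow_inv_div_rpow (hp : p ≠ 0) (a b x : ℝ) {c : ℝ} (hc : 0 < c) :
    signedRpow p⁻¹ a b (x / c ^ p) = signedRpow p⁻¹ a b x / c := by
  have hcp : 0 < c ^ p := Real.rpow_pos_of_pos hc p
  rcases le_or_gt 0 x with hx | hx
  · rw [signedRpow_of_nonneg _ _ _ hx, signedRpow_of_nonneg _ _ _ (div_nonneg hx hcp.le),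
      Real.div_rpow hx hcp.le, Real.rpow_rpow_inv hc.le hp, mul_div_assoc]
  · rw [signedRpow_of_neg _ _ _ hx, signedRpow_of_neg _ _ _ (div_neg_of_neg_of_pos hx hcp),
      ← neg_div, Real.div_rpow (neg_nonneg.2 hx.le) hcp.le, Real.rpow_rpow_inv hc.le hp,
      mul_div_assoc', neg_div]

theorem sq_signedRpow (p a b : ℝ) {x : ℝ} (hx : x ≠ 0) :
    signedRpow p a b x ^ 2 = (if 0 < x then a else b) ^ 2 * |x| ^ (2 * p) := by
  rw [rpow_two_mul_of_nonneg (abs_nonneg x), ← mul_pow]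
  rcases hx.lt_or_gt with hneg | hpos
  · rw [signedRpow_of_neg p a b hneg, neg_sq, if_neg hneg.not_gt, abs_of_neg hneg]
  · rw [signedRpow_of_nonneg p a b hpos.le, if_pos hpos, abs_of_pos hpos]

theorem measurable_signedRpow (p a b : ℝ) : Measurable (signedRpow p a b) :=
  Measurable.ite measurableSet_Ici (by fun_prop) (by fun_prop)

theorem leftInverse_signedRpow (hp : p ≠ 0) (ha : 0 < a) (hb : 0 < b) :
    LeftInverse (signedRpow p⁻¹ a⁻¹ b⁻¹) (signedRpow p (a ^ p) (b ^ p)) := by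
  have hpos {a b x : ℝ} (ha : 0 < a) (hx : 0 < x) :
      signedRpow p⁻¹ a⁻¹ b⁻¹ (signedRpow p (a ^ p) (b ^ p) x) = x := by
    rw [signedRpow_of_nonneg _ _ _ hx.le, ← Real.mul_rpow ha.le hx.le,
      signedRpow_of_nonneg _ _ _ (by positivity), Real.rpow_rpow_inv (by positivity) hp,
      inv_mul_cancel_left₀ ha.ne']
  intro x
  rcases lt_trichotomy x 0 with hx | rfl | hx
  · rw [← neg_neg x, signedRpow_neg hp, signedRpow_neg (inv_ne_zero hp), hpos hb (neg_pos.2 hx)]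
  · rw [signedRpow_zero hp, signedRpow_zero (inv_ne_zero hp)]
  · exact hpos ha hx

theorem rightInverse_signedRpow (hp : p ≠ 0) (ha : 0 < a) (hb : 0 < b) :
    RightInverse (signedRpow p⁻¹ a⁻¹ b⁻¹) (signedRpow p (a ^ p) (b ^ p)) := by
  have hinv := leftInverse_signedRpow (inv_ne_zero hp) (inv_pos.2 (Real.rpow_pos_of_pos ha p))
    (inv_pos.2 (Real.rpow_pos_of_pos hb p))
  rwa [inv_inv, inv_inv, inv_inv, Real.inv_rpow (by positivity), Real.inv_rpow (by positivity),
    Real.rpow_rpow_inv ha.le hp, Real.rpow_rpow_inv hb.le hp] at hinv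

/-- `signedRpow p (a ^ p) (b ^ p)` as a measurable equivalence: the coordinate change that
conjugates `g_{p,a,b}` to `halfBoole`. -/
noncomputable def signedRpowEquiv (hp : p ≠ 0) (ha : 0 < a) (hb : 0 < b) : ℝ ≃ᵐ ℝ where
  toFun := signedRpow p (a ^ p) (b ^ p)
  invFun := signedRpow p⁻¹ a⁻¹ b⁻¹
  left_inv := leftInverse_signedRpow hp ha hb
  right_inv := rightInverse_signedRpow hp ha hb
  measurable_toFun := measurable_signedRpow _ _ _
  measurable_invFun := measurable_signedRpow _ _ _

theorem hasDerivAt_signedRpow (p a b : ℝ) {x : ℝ} (hx : x ≠ 0) :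
    HasDerivAt (signedRpow p a b) ((if 0 < x then a else b) * (p * |x| ^ (p - 1))) x := by
  rcases hx.lt_or_gt with hneg | hpos
  · have hlocal : signedRpow p a b =ᶠ[nhds x] fun z ↦ -(b * (-z) ^ p) :=
      mem_of_superset (Iio_mem_nhds hneg) fun z hz ↦ signedRpow_of_neg p a b hz
    have hpow :=
      (((hasDerivAt_neg x).rpow_const (p := p) (.inl (neg_ne_zero.2 hx))).const_mul b).neg
    refine (hpow.congr_of_eventuallyEq hlocal).congr_deriv ?_
    rw [if_neg hneg.not_gt, abs_of_neg hneg]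
    ring
  · have hlocal : signedRpow p a b =ᶠ[nhds x] fun z ↦ a * z ^ p :=
      mem_of_superset (Ioi_mem_nhds hpos) fun z hz ↦ signedRpow_of_nonneg p a b (le_of_lt hz)
    have hpow := (Real.hasDerivAt_rpow_const (p := p) (.inl hx)).const_mul a
    rw [if_pos hpos, abs_of_pos hpos]
    exact hpow.congr_of_eventuallyEq hlocal

end SignedRpow

section GMap

variable {α δ₁ δ₂ : ℝ}

theorem gMap_neg (α : ℝ) (hδ₁ : 0 < δ₁) (hδ₂ : 0 < δ₂) (x : ℝ) :
    gMap α δ₁ δ₂ (-x) = -gMap α δ₂ δ₁ x := by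
  have h₁ : 0 < 1 / δ₁ := one_div_pos.2 hδ₁
  have h₂ : 0 < 1 / δ₂ := one_div_pos.2 hδ₂
  simp only [gMap, abs_neg, mul_neg, mul_comm δ₂ δ₁]
  split_ifs <;> grind

theorem gMap_of_pos (hα : 0 < α) (hδ₁ : 0 < δ₁) (hδ₂ : 0 < δ₂) {x : ℝ} (hx : 0 < x) :
    gMap α δ₁ δ₂ x =
      signedRpow α⁻¹ δ₁⁻¹ δ₂⁻¹ (((δ₁ * x) ^ (2 * α) - 1) / 2) / (δ₁ * x) := by
  have hα' : 0 < 2 * α := by positivity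
  have hu : 0 < δ₁ * x := mul_pos hδ₁ hx
  rcases lt_trichotomy x (1 / δ₁) with hlt | heq | hgt
  · have hpow : (δ₁ * x) ^ (2 * α) < 1 := Real.rpow_lt_one hu.le ((lt_div_iff₀' hδ₁).1 hlt) hα'
    rw [gMap, if_neg hlt.not_gt, if_pos ⟨hx, hlt⟩, signedRpow_of_neg _ _ _ (by linarith),
      abs_of_pos hx, abs_of_pos hu, one_div α, ← neg_div 2, neg_sub]
    field_simp
  · have hone : δ₁ * x = 1 := by rw [heq, mul_one_div_cancel hδ₁.ne']
    rw [hone, Real.one_rpow, sub_self, zero_div, signedRpow_zero (inv_ne_zero hα.ne'), zero_div,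
      gMap, if_neg heq.not_gt, if_neg fun h ↦ h.2.ne heq, if_neg fun h ↦ h.2.not_gt hx,
      if_neg ((neg_neg_of_pos (one_div_pos.2 hδ₂)).trans hx).not_gt]
  · have hpow : 1 < (δ₁ * x) ^ (2 * α) := Real.one_lt_rpow ((div_lt_iff₀' hδ₁).1 hgt) hα'
    rw [gMap, if_pos hgt, signedRpow_of_nonneg _ _ _ (by linarith), abs_of_pos hx, abs_of_pos hu,
      one_div α]
    field_simp

theorem gMap_eq_signedRpow_halfBoole (hα : 0 < α) (hδ₁ : 0 < δ₁) (hδ₂ : 0 < δ₂) (x : ℝ) :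
    gMap α δ₁ δ₂ x =
      signedRpow α⁻¹ δ₁⁻¹ δ₂⁻¹ (halfBoole (signedRpow α (δ₁ ^ α) (δ₂ ^ α) x)) := by
  have hpos {δ₁ δ₂ x : ℝ} (hδ₁ : 0 < δ₁) (hδ₂ : 0 < δ₂) (hx : 0 < x) : gMap α δ₁ δ₂ x =
      signedRpow α⁻¹ δ₁⁻¹ δ₂⁻¹ (halfBoole (signedRpow α (δ₁ ^ α) (δ₂ ^ α) x)) := by
    have hu : 0 < δ₁ * x := mul_pos hδ₁ hx
    rw [gMap_of_pos hα hδ₁ hδ₂ hx, signedRpow_of_nonneg _ _ _ hx.le,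
      ← Real.mul_rpow hδ₁.le hx.le, halfBoole_rpow hu, signedRpow_inv_div_rpow hα.ne' _ _ _ hu]
  rcases lt_trichotomy x 0 with hx | rfl | hx
  · rw [← neg_inj, ← gMap_neg α hδ₂ hδ₁, hpos hδ₂ hδ₁ (neg_pos.2 hx), signedRpow_neg hα.ne',
      halfBoole_neg, signedRpow_neg (inv_ne_zero hα.ne')]
  · simp [gMap, halfBoole, signedRpow_zero, hα.ne']
  · exact hpos hδ₁ hδ₂ hx

theorem rhoDensity_eq_abs_deriv_mul_cauchyPDFReal (hα : 0 ≤ α) (hδ₁ : 0 ≤ δ₁) (hδ₂ : 0 ≤ δ₂)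
    {x : ℝ} (hx : x ≠ 0) :
    rhoDensity α δ₁ δ₂ x =
      |(if 0 < x then δ₁ ^ α else δ₂ ^ α) * (α * |x| ^ (α - 1))| *
        cauchyPDFReal 0 1 (signedRpow α (δ₁ ^ α) (δ₂ ^ α) x) := by
  rw [cauchyPDFReal_def, sub_zero, sq_signedRpow _ _ _ hx, abs_of_nonneg (by positivity),
    rhoDensity, NNReal.coe_one, rpow_two_mul_of_nonneg hδ₁, rpow_two_mul_of_nonneg hδ₂]
  rcases hx.lt_or_gt with hneg | hpos
  · rw [if_neg hneg.not_gt, if_pos hneg, if_neg hneg.not_gt]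
    field_simp
    ring
  · rw [if_pos hpos, if_pos hpos, abs_of_pos hpos]
    field_simp
    ring

theorem measurePreserving_signedRpowEquiv (hα : 0 < α) (hδ₁ : 0 < δ₁) (hδ₂ : 0 < δ₂) :
    MeasurePreserving (signedRpowEquiv hα.ne' hδ₁ hδ₂)
      (volume.withDensity fun x ↦ ENNReal.ofReal (rhoDensity α δ₁ δ₂ x)) (cauchyMeasure 0 1) := by
  have hzero : signedRpowEquiv hα.ne' hδ₁ hδ₂ 0 = 0 := signedRpow_zero hα.ne' _ _
  have hbij : BijOn (signedRpowEquiv hα.ne' hδ₁ hδ₂) {0}ᶜ {0}ᶜ :=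
    (signedRpowEquiv hα.ne' hδ₁ hδ₂).toEquiv.bijOn fun x ↦
      not_congr ((signedRpowEquiv hα.ne' hδ₁ hδ₂).injective.eq_iff' hzero)
  have hmp := measurePreserving_withDensity_of_bijOn_of_hasDerivWithinAt
    (p := cauchyPDF 0 1) (q := fun x ↦ ENNReal.ofReal (rhoDensity α δ₁ δ₂ x))
    (signedRpowEquiv hα.ne' hδ₁ hδ₂).measurable (measurableSet_singleton 0).compl hbij
    (fun x hx ↦ (hasDerivAt_signedRpow α (δ₁ ^ α) (δ₂ ^ α) hx).hasDerivWithinAt)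
    (fun x hx ↦ by
      rw [rhoDensity_eq_abs_deriv_mul_cauchyPDFReal hα.le hδ₁.le hδ₂.le hx,
        ENNReal.ofReal_mul (abs_nonneg _)]
      rfl)
  rwa [restrict_compl_singleton, ← cauchyMeasure_of_scale_ne_zero 0 one_ne_zero] at hmp

end GMap

end

theorem gMap_ergodic_general {α δ₁ δ₂ : ℝ} (hα : 0 < α) (hδ₁ : 0 < δ₁) (hδ₂ : 0 < δ₂) :
    Ergodic (gMap α δ₁ δ₂)
      (volume.withDensity fun x ↦ ENNReal.ofReal (rhoDensity α δ₁ δ₂ x)) := by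
  have hconj : gMap α δ₁ δ₂ = (signedRpowEquiv hα.ne' hδ₁ hδ₂).symm ∘ halfBoole ∘
      signedRpowEquiv hα.ne' hδ₁ hδ₂ :=
    funext (gMap_eq_signedRpow_halfBoole hα hδ₁ hδ₂)
  rw [hconj]
  exact ((measurePreserving_signedRpowEquiv hα hδ₁ hδ₂).symm _).ergodic_conjugate_iff.2
    ergodic_halfBoole_cauchyMeasure

theorem gMap_ergodic
    (α δ₁ δ₂ : ℝ) (hα0 : 0 < α) (hα2 : α < 2) (hδ₁ : 0 < δ₁) (hδ₂ : 0 < δ₂)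
    (μ : Measure ℝ)
    (hμ : μ = volume.withDensity (fun x => ENNReal.ofReal (rhoDensity α δ₁ δ₂ x))) :
    Ergodic (gMap α δ₁ δ₂) μ := by
  subst hμ
  exact gMap_ergodic_general hα0 hδ₁ hδ₂
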